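/- arXiv:2306.01799 — 6 statements merged into one kernel-verified Lean document; each statement's English description precedes it below -/
import Mathlib

section
/- Let K ≤ n, let α : Fin K → ℝ be strictly decreasing (α k > α l whenever k < l) with α k > 0 for all k, and let v : Fin n → ℝ be injective. If an injective map σ₀ : Fin K → Fin n maximizes W(σ) = ∑_{k} α k * v (σ k) over all injective maps σ : Fin K → Fin n, then v (σ₀ k) > v (σ₀ l) whenever k < l, and v (σ₀ (K-1)) > v i for every index i not in the range of σ₀; that is, σ₀ lists the K largest values of v in strictly decreasing order. -/
/-!
An exchange argument. Swapping the ads in slots `k` and `l` changes the welfare by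
`(α k - α l) * (v (σ l) - v (σ k))`, and replacing the ad in slot `k` by an ad `i` changes it by
`α k * (v i - v (σ k))`. Neither change is positive at a maximizer, so the sign of the factor in `α`
decides that of the factor in `v`.
-/

open Function

section Welfare

variable {ι β R : Type*} [Fintype ι] [Ring R]

/-- The welfare `W(σ)` of placing ad `σ k` in slot `k`, for position multipliers `α` and eCPMs `v`.
It is defined for every placement; assignments are the injective ones. -/
def welfare (α : ι → R) (v : β → R) (σ : ι → β) : R :=
  ∑ k, α k * v (σ k)

theorem welfare_comp_swap_sub [DecidableEq ι] (α : ι → R) (v : β → R) (σ : ι → β) (k l : ι) :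
    welfare α v (σ ∘ Equiv.swap k l) - welfare α v σ = (α k - α l) * (v (σ l) - v (σ k)) := by
  obtain rfl | hkl := eq_or_ne k l
  · simp
  have off_swap (m : ι) (hm : m ≠ k ∧ m ≠ l) :
      α m * v (σ (Equiv.swap k l m)) - α m * v (σ m) = 0 := by
    rw [Equiv.swap_apply_of_ne_of_ne hm.1 hm.2, sub_self]
  calc welfare α v (σ ∘ Equiv.swap k l) - welfare α v σ
      = ∑ m, (α m * v (σ (Equiv.swap k l m)) - α m * v (σ m)) :=
        (Finset.sum_sub_distrib _ _).symm
    _ = (α k * v (σ l) - α k * v (σ k)) + (α l * v (σ k) - α l * v (σ l)) := by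
        rw [Fintype.sum_eq_add k l hkl off_swap, Equiv.swap_apply_left, Equiv.swap_apply_right]
    _ = (α k - α l) * (v (σ l) - v (σ k)) := by noncomm_ring

theorem welfare_update_sub [DecidableEq ι] (α : ι → R) (v : β → R) (σ : ι → β) (k : ι) (i : β) :
    welfare α v (update σ k i) - welfare α v σ = α k * (v i - v (σ k)) := by
  have off_slot (m : ι) (hm : m ≠ k) : α m * v (update σ k i m) - α m * v (σ m) = 0 := by
    rw [update_of_ne hm, sub_self]
  calc welfare α v (update σ k i) - welfare α v σ
      = ∑ m, (α m * v (update σ k i m) - α m * v (σ m)) := (Finset.sum_sub_distrib _ _).symm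
    _ = α k * v i - α k * v (σ k) := by rw [Fintype.sum_eq_single k off_slot, update_self]
    _ = α k * (v i - v (σ k)) := (mul_sub _ _ _).symm

end Welfare

theorem injective_update_of_notMem_range {ι β : Type*} [DecidableEq ι] {σ : ι → β}
    (hσ : Injective σ) (k : ι) {i : β} (hi : i ∉ Set.range σ) : Injective (update σ k i) := by
  intro a b hab
  simp only [update_apply] at hab
  split_ifs at hab with ha hb hb
  · exact ha.trans hb.symm
  · exact absurd ⟨b, hab.symm⟩ hi
  · exact absurd ⟨a, hab⟩ hi
  · exact hσ hab

section Maximizer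

variable {ι β R : Type*} [Fintype ι] [Ring R] [LinearOrder R] [IsStrictOrderedRing R]
  {α : ι → R} {v : β → R} {σ : ι → β}

theorem monovary_of_isMaxOn_welfare (hσ : Injective σ)
    (hmax : IsMaxOn (welfare α v) {τ | Injective τ} σ) : Monovary (v ∘ σ) α := by
  classical
  intro l k hα
  have swap_le : welfare α v (σ ∘ Equiv.swap k l) ≤ welfare α v σ :=
    hmax (hσ.comp (Equiv.swap k l).injective)
  rw [← sub_nonpos, welfare_comp_swap_sub] at swap_le
  exact sub_nonpos.mp (nonpos_of_mul_nonpos_right swap_le (sub_pos.mpr hα))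

theorem le_of_isMaxOn_welfare_of_notMem_range (hσ : Injective σ)
    (hmax : IsMaxOn (welfare α v) {τ | Injective τ} σ) {k : ι} (hα : 0 < α k) {i : β}
    (hi : i ∉ Set.range σ) : v i ≤ v (σ k) := by
  classical
  have update_le : welfare α v (update σ k i) ≤ welfare α v σ :=
    hmax (injective_update_of_notMem_range hσ k hi)
  rw [← sub_nonpos, welfare_update_sub] at update_le
  exact sub_nonpos.mp (nonpos_of_mul_nonpos_right update_le hα)

theorem welfare_maximizer_is_sorted_general (hv : Injective v) (hσ : Injective σ)
    (hmax : IsMaxOn (welfare α v) {τ | Injective τ} σ) :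
    (∀ k l, α l < α k → v (σ l) < v (σ k)) ∧
      ∀ i ∉ Set.range σ, ∀ k, 0 < α k → v i < v (σ k) := by
  refine ⟨fun k l hα => ?_, fun i hi k hα => ?_⟩
  · have hlk : l ≠ k := fun h => hα.ne (congrArg α h)
    exact (monovary_of_isMaxOn_welfare hσ hmax hα).lt_of_ne ((hv.comp hσ).ne hlk)
  · have hik : i ≠ σ k := fun h => hi ⟨k, h.symm⟩
    exact (le_of_isMaxOn_welfare_of_notMem_range hσ hmax hα hi).lt_of_ne (hv.ne hik)

end Maximizer

/-- Only-if direction: with strictly decreasing positive multipliers and injective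
eCPMs, any welfare-maximizing injective assignment lists the K largest eCPMs in
strictly decreasing order. -/
theorem welfare_maximizer_is_sorted
    (n K : ℕ) (hK : 0 < K) (hKn : K ≤ n)
    (α : Fin K → ℝ)
    (hα_strict : ∀ k l : Fin K, k < l → α l < α k)
    (hα_pos : ∀ k : Fin K, 0 < α k)
    (v : Fin n → ℝ) (hv : Function.Injective v)
    (σ₀ : Fin K → Fin n) (hσ₀ : Function.Injective σ₀)
    (hmax : ∀ σ : Fin K → Fin n, Function.Injective σ →
      ∑ k : Fin K, α k * v (σ k) ≤ ∑ k : Fin K, α k * v (σ₀ k)) :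
    (∀ k l : Fin K, k < l → v (σ₀ l) < v (σ₀ k)) ∧
    (∀ i : Fin n, i ∉ Set.range σ₀ →
      v i < v (σ₀ ⟨K - 1, Nat.sub_lt hK Nat.one_pos⟩)) := by
  have ⟨hsorted, hunplaced⟩ := welfare_maximizer_is_sorted_general hv hσ₀ (isMaxOn_iff.mpr hmax)
  exact ⟨fun k l hkl => hsorted k l (hα_strict k l hkl), fun i hi => hunplaced i hi _ (hα_pos _)⟩
end

section
/- Let n, b, p, q be as in the setup with b i > 0, p i ∈ [0,1], q i ∈ [0,1]. If q minimizes the conditional risk, i.e. R(q) = −(1/2) · ∑_{i} ∑_{j} |b i * p i − b j * p j|, then q ranks every pair of ads correctly: for all indices i, j, if b i * p i > b j * p j then b i * q i > b j * q j. -/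
/-!
The ordered pairs `(i, j)` and `(j, i)` together contribute `x i - x j`, `0` or `x j - x i` to the
risk, according to whether `y i < y j`, `y i = y j` or `y j < y i`. This is at least
`-|x i - x j|`, with equality exactly when the pair is ranked correctly. Twice the risk is the sum
of these contributions, so it attains the sum of the lower bounds only if every pair attains its
own.
-/

open Finset

section Pair

variable {G α : Type*} [AddCommGroup G] [LinearOrder α]

/-- The risk of an ordered pair of ads with true values `u`, `v` and predicted values `s`, `t`: the
amount `u - v` is charged unless the first ad is predicted to be strictly better. -/
def pairRisk (u v : G) (s t : α) : G :=
  if s ≤ t then u - v else 0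

theorem pairRisk_self (u : G) (s t : α) : pairRisk u u s t = 0 := by
  simp [pairRisk]

theorem pairRisk_add_swap_of_lt {s t : α} (hst : s < t) (u v : G) :
    pairRisk u v s t + pairRisk v u t s = u - v := by
  simp [pairRisk, hst.le, hst.not_ge]

theorem pairRisk_add_swap_of_eq (u v : G) (s : α) :
    pairRisk u v s s + pairRisk v u s s = 0 := by
  simp [pairRisk]

variable [LinearOrder G] [IsOrderedAddMonoid G]

theorem neg_abs_sub_le_pairRisk_add_swap (u v : G) (s t : α) :
    -|u - v| ≤ pairRisk u v s t + pairRisk v u t s := by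
  rcases lt_trichotomy s t with hst | rfl | hts
  · rw [pairRisk_add_swap_of_lt hst]
    exact neg_abs_le _
  · rw [pairRisk_add_swap_of_eq]
    exact neg_nonpos.2 (abs_nonneg _)
  · rw [add_comm, pairRisk_add_swap_of_lt hts, abs_sub_comm]
    exact neg_abs_le _

theorem neg_abs_sub_eq_pairRisk_add_swap_iff {u v : G} {s t : α} :
    -|u - v| = pairRisk u v s t + pairRisk v u t s ↔ (v < u → t < s) ∧ (u < v → s < t) := by
  rcases lt_trichotomy s t with hst | rfl | hts
  · rw [pairRisk_add_swap_of_lt hst, neg_eq_iff_eq_neg, abs_eq_neg_self, sub_nonpos]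
    simp [hst, hst.not_gt]
  · rw [pairRisk_add_swap_of_eq, neg_eq_zero, abs_eq_zero, sub_eq_zero]
    simp [le_antisymm_iff]
  · rw [add_comm, pairRisk_add_swap_of_lt hts, abs_sub_comm, neg_eq_iff_eq_neg, abs_eq_neg_self,
      sub_nonpos]
    simp [hts, hts.not_gt]

end Pair

section ConditionalRisk

variable {ι G α : Type*} [Fintype ι] [AddCommGroup G] [LinearOrder α]

/-- The conditional risk `R` of predicted values `y` for ads with true values `x`; in the setting of
ad auctions these are the predicted and the ground-truth eCPM. Diagonal pairs contribute `0`, so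
they are not excluded from the sum. -/
def conditionalRisk (x : ι → G) (y : ι → α) : G :=
  ∑ i, ∑ j, pairRisk (x i) (x j) (y i) (y j)

theorem conditionalRisk_eq_sum_ne {R : Type*} [Ring R] [DecidableEq ι] (x : ι → R) (y : ι → α) :
    conditionalRisk x y =
      ∑ i, ∑ j, if i ≠ j then (x i - x j) * (if y i ≤ y j then 1 else 0) else 0 := by
  refine sum_congr rfl fun i _ => sum_congr rfl fun j _ => ?_
  rcases eq_or_ne i j with rfl | hij
  · simp [pairRisk_self]
  · simp [pairRisk, hij]

theorem two_nsmul_conditionalRisk (x : ι → G) (y : ι → α) :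
    2 • conditionalRisk x y =
      ∑ i, ∑ j, (pairRisk (x i) (x j) (y i) (y j) + pairRisk (x j) (x i) (y j) (y i)) := by
  simp only [sum_add_distrib]
  rw [two_nsmul, conditionalRisk]
  exact congrArg _ sum_comm

theorem two_nsmul_conditionalRisk_eq_neg_sum_abs_sub_iff [LinearOrder G] [IsOrderedAddMonoid G]
    {x : ι → G} {y : ι → α} :
    2 • conditionalRisk x y = -∑ i, ∑ j, |x i - x j| ↔ ∀ i j, x j < x i → y j < y i := by
  have bound (i j : ι) := neg_abs_sub_le_pairRisk_add_swap (x i) (x j) (y i) (y j)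
  rw [two_nsmul_conditionalRisk, eq_comm]
  simp only [← sum_neg_distrib]
  rw [sum_eq_sum_iff_of_le fun i _ => sum_le_sum fun j _ => bound i j]
  simp only [sum_eq_sum_iff_of_le fun j _ => bound _ j, mem_univ, true_imp_iff,
    neg_abs_sub_eq_pairRisk_add_swap_iff]
  exact ⟨fun h i j => (h i j).1, fun h i j => ⟨h i j, h j i⟩⟩

end ConditionalRisk

theorem risk_minimizer_ranks_correctly_general {ι K α : Type*} [Fintype ι]
    [Field K] [LinearOrder K] [IsStrictOrderedRing K] [LinearOrder α] (x : ι → K) (y : ι → α) :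
    conditionalRisk x y = -(1 / 2) * ∑ i, ∑ j, |x i - x j| ↔ ∀ i j, x j < x i → y j < y i := by
  rw [← two_nsmul_conditionalRisk_eq_neg_sum_abs_sub_iff, two_nsmul]
  constructor <;> intro h <;> linarith

/-- Any minimizer of the conditional risk ranks every pair of ads correctly. -/
theorem risk_minimizer_ranks_correctly
    (n : ℕ) (b p q : Fin n → ℝ)
    (hb : ∀ i, 0 < b i)
    (hp : ∀ i, p i ∈ Set.Icc (0 : ℝ) 1)
    (hq : ∀ i, q i ∈ Set.Icc (0 : ℝ) 1)
    (hmin : ∑ i : Fin n, ∑ j : Fin n,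
        (if i ≠ j then
          (b i * p i - b j * p j) * (if b i * q i ≤ b j * q j then (1 : ℝ) else 0)
        else 0) =
      -(1 / 2) * ∑ i : Fin n, ∑ j : Fin n, |b i * p i - b j * p j|) :
    ∀ i j : Fin n, b j * p j < b i * p i → b j * q j < b i * q i :=
  (risk_minimizer_ranks_correctly_general (fun i => b i * p i) fun i => b i * q i).1 <|
    (conditionalRisk_eq_sum_ne _ _).trans hmin
end

section
/- Let n ≥ 1, B > 0, σ > 0, and b, p, q : Fin n → ℝ with 0 < b i ≤ B, p i ∈ [0,1], q i ∈ [0,1] for all i. Define the ranking loss ℓ(q) = ∑_{i ≠ j} (b i * p i − b j * p j) * χ(b i * q i ≤ b j * q j) and the logistic surrogate ℓ^log_σ(q) = ∑_{i ≠ j} (b i * p i − b j * p j) * log(1 + exp(−σ * (b i * q i − b j * q j))), both sums over ordered pairs of distinct indices. Then |ℓ^log_σ(q) − ℓ(q)| ≤ (1/2) * max{1, log(1 + exp(σ*B)) − log(1 + exp(−σ*B)) − 1} * ∑_{i ∈ Fin n} ∑_{j ∈ Fin n} |b i * p i − b j * p j|. -/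
/-!
Let `F x = log (1 + exp (-σ x)) - χ (x ≤ 0)` be the pointwise error, evaluated at the score gaps
`x = u i - u j`. Swapping `i` and `j` changes the sign of the weights, so the error of the total is
half the weighted sum of `F x - F (-x)`. Since `log (1 + exp y) - log (1 + exp (-y)) = y`, that
difference is exactly `sign x - σ x`. For `σ ≥ 0` its two terms have opposite signs, so its absolute
value is at most `max 1 (σ |x| - 1)`.
-/

lemma log_one_add_exp_sub_log_one_add_exp_neg (y : ℝ) :
    Real.log (1 + Real.exp y) - Real.log (1 + Real.exp (-y)) = y := by
  have hfactor : 1 + Real.exp y = Real.exp y * (1 + Real.exp (-y)) := by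
    rw [mul_add, mul_one, ← Real.exp_add, add_neg_cancel, Real.exp_zero, add_comm]
  rw [hfactor, Real.log_mul (Real.exp_ne_zero y) (by positivity), Real.log_exp,
    add_sub_cancel_right]

lemma ite_ge_sub_ite_le_eq_sign {α R : Type*} [AddGroup α] [LinearOrder α] [AddRightMono α]
    [AddGroupWithOne R] (a b : α) :
    (if b ≤ a then (1 : R) else 0) - (if a ≤ b then 1 else 0) = SignType.sign (a - b) := by
  rcases lt_trichotomy a b with hlt | rfl | hgt
  · simp [hlt.le, hlt.not_ge, sign_neg (sub_neg.2 hlt)]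
  · simp
  · simp [hgt.le, hgt.not_ge, sign_pos (sub_pos.2 hgt)]

lemma abs_sign_sub_mul_le {R : Type*} [Ring R] [LinearOrder R] [IsOrderedRing R] {σ : R}
    (hσ : 0 ≤ σ) (x : R) :
    |(SignType.sign x : R) - σ * x| ≤ max 1 (σ * |x| - 1) := by
  have habs : |(SignType.sign x : R) - σ * x| ≤ |σ * |x| - 1| := by
    rcases lt_trichotomy x 0 with hx | rfl | hx
    · rw [sign_neg hx, abs_of_neg hx, SignType.coe_neg_one, mul_neg, neg_sub_comm]
    · simp
    · simp [sign_pos hx, abs_of_pos hx, abs_sub_comm]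
  have hnonneg : 0 ≤ σ * |x| := mul_nonneg hσ (abs_nonneg x)
  have hneg : -(σ * |x| - 1) ≤ 1 := (neg_sub _ _).trans_le (sub_le_self 1 hnonneg)
  exact habs.trans (abs_le'.2 ⟨le_max_right _ _, le_max_of_le_left hneg⟩)

section PairwiseSums

variable {ι R : Type*} [Fintype ι]

lemma two_mul_sum_sum_mul_of_antisymm [Ring R] {w : ι → ι → R} (hw : ∀ i j, w j i = -w i j)
    (L : ι → ι → R) :
    2 * ∑ i, ∑ j, w i j * L i j = ∑ i, ∑ j, w i j * (L i j - L j i) := by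
  have hswap : ∑ i, ∑ j, w i j * L j i = -∑ i, ∑ j, w i j * L i j := by
    simp only [← Finset.sum_neg_distrib, ← neg_mul, ← hw]
    exact Finset.sum_comm
  simp only [mul_sub, Finset.sum_sub_distrib]
  rw [hswap, sub_neg_eq_add, two_mul]

lemma abs_sum_sum_mul_le [Ring R] [LinearOrder R] [IsOrderedRing R]
    (w : ι → ι → R) {L : ι → ι → R} {M : R} (hL : ∀ i j, |L i j| ≤ M) :
    |∑ i, ∑ j, w i j * L i j| ≤ (∑ i, ∑ j, |w i j|) * M :=
  calc |∑ i, ∑ j, w i j * L i j|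
      ≤ ∑ i, ∑ j, |w i j * L i j| :=
        (Finset.abs_sum_le_sum_abs _ _).trans
          (Finset.sum_le_sum fun _ _ ↦ Finset.abs_sum_le_sum_abs _ _)
    _ ≤ ∑ i, ∑ j, |w i j| * M := by
        gcongr with i _ j _
        rw [abs_mul]
        gcongr
        exact hL i j
    _ = (∑ i, ∑ j, |w i j|) * M := by simp only [Finset.sum_mul]

end PairwiseSums

section RankingLoss

variable {ι : Type*} [Fintype ι] [DecidableEq ι]

/-- The weighted total of the losses `L i j` over ordered pairs of distinct indices; the ranking
loss and its surrogates are of this form. -/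
def pairwiseLoss (w L : ι → ι → ℝ) : ℝ :=
  ∑ i, ∑ j, if i ≠ j then w i j * L i j else 0

/-- The ranking loss `ℓ` of the scores `u`: the weight `w i j` counts when `j` is ranked at least
as high as `i`. For ads, `u i` is the predicted eCPM and `w i j` the difference of the true ones. -/
noncomputable def rankingLoss (w : ι → ι → ℝ) (u : ι → ℝ) : ℝ :=
  pairwiseLoss w fun i j ↦ if u i ≤ u j then 1 else 0

/-- The logistic surrogate `ℓ^log_σ` of `rankingLoss`, with scale parameter `σ`. -/
noncomputable def logisticLoss (σ : ℝ) (w : ι → ι → ℝ) (u : ι → ℝ) : ℝ :=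
  pairwiseLoss w fun i j ↦ Real.log (1 + Real.exp (-σ * (u i - u j)))

lemma pairwiseLoss_sub (w L L' : ι → ι → ℝ) :
    pairwiseLoss w L - pairwiseLoss w L' = pairwiseLoss w (L - L') := by
  simp only [pairwiseLoss, ← Finset.sum_sub_distrib, Pi.sub_apply, mul_sub, ite_sub_ite,
    sub_zero]

lemma pairwiseLoss_eq_sum_of_diag_eq_zero {w : ι → ι → ℝ} (hw : ∀ i, w i i = 0)
    (L : ι → ι → ℝ) :
    pairwiseLoss w L = ∑ i, ∑ j, w i j * L i j := by
  refine Finset.sum_congr rfl fun i _ ↦ Finset.sum_congr rfl fun j _ ↦ ?_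
  rcases eq_or_ne i j with rfl | hij
  · simp [hw]
  · rw [if_pos hij]

lemma abs_pairwiseLoss_le_of_antisymm {w L : ι → ι → ℝ} {M : ℝ} (hw : ∀ i j, w j i = -w i j)
    (hL : ∀ i j, |L i j - L j i| ≤ M) :
    |pairwiseLoss w L| ≤ 1 / 2 * M * ∑ i, ∑ j, |w i j| := by
  have hbound := abs_sum_sum_mul_le w hL
  rw [← two_mul_sum_sum_mul_of_antisymm hw,
    ← pairwiseLoss_eq_sum_of_diag_eq_zero fun i ↦ self_eq_neg.1 (hw i i), abs_mul,
    abs_two] at hbound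
  linarith

lemma logistic_sub_ite_sub_swap (σ x y : ℝ) :
    (Real.log (1 + Real.exp (-σ * (x - y))) - if x ≤ y then 1 else 0) -
      (Real.log (1 + Real.exp (-σ * (y - x))) - if y ≤ x then 1 else 0) =
    SignType.sign (x - y) - σ * (x - y) := by
  have hlog := log_one_add_exp_sub_log_one_add_exp_neg (-σ * (x - y))
  rw [← mul_neg, neg_sub] at hlog
  have hsign := ite_ge_sub_ite_le_eq_sign (R := ℝ) x y
  linarith

theorem logistic_surrogate_approximation_general {σ B : ℝ} (hσ : 0 ≤ σ) {w : ι → ι → ℝ}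
    (hw : ∀ i j, w j i = -w i j) {u : ι → ℝ} (hu : ∀ i j, u i - u j ≤ B) :
    |logisticLoss σ w u - rankingLoss w u| ≤
      1 / 2 * max 1 (σ * B - 1) * ∑ i, ∑ j, |w i j| := by
  rw [logisticLoss, rankingLoss, pairwiseLoss_sub]
  refine abs_pairwiseLoss_le_of_antisymm hw fun i j ↦ ?_
  simp only [Pi.sub_apply, logistic_sub_ite_sub_swap]
  have hgap : |u i - u j| ≤ B := abs_sub_le_iff.2 ⟨hu i j, hu j i⟩
  exact (abs_sign_sub_mul_le hσ _).trans (by gcongr)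

end RankingLoss

/-- The logistic surrogate approximates the ranking loss up to a constant times
the total absolute pairwise eCPM gap. -/
theorem logistic_surrogate_approximation
    (n : ℕ) (hn : 1 ≤ n) (B σ : ℝ) (hB : 0 < B) (hσ : 0 < σ)
    (b p q : Fin n → ℝ)
    (hb : ∀ i, 0 < b i ∧ b i ≤ B)
    (hp : ∀ i, p i ∈ Set.Icc (0 : ℝ) 1)
    (hq : ∀ i, q i ∈ Set.Icc (0 : ℝ) 1) :
    |(∑ i : Fin n, ∑ j : Fin n,
        (if i ≠ j then
          (b i * p i - b j * p j) *
            Real.log (1 + Real.exp (-σ * (b i * q i - b j * q j)))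
        else 0)) -
      (∑ i : Fin n, ∑ j : Fin n,
        (if i ≠ j then
          (b i * p i - b j * p j) * (if b i * q i ≤ b j * q j then (1 : ℝ) else 0)
        else 0))| ≤
    (1 / 2) *
      max 1 (Real.log (1 + Real.exp (σ * B)) - Real.log (1 + Real.exp (-(σ * B))) - 1) *
      ∑ i : Fin n, ∑ j : Fin n, |b i * p i - b j * p j| := by
  have hgap (i j : Fin n) : b i * q i - b j * q j ≤ B :=
    calc b i * q i - b j * q j ≤ b i * q i := sub_le_self _ (mul_nonneg (hb j).1.le (hq j).1)
      _ ≤ b i := mul_le_of_le_one_right (hb i).1.le (hq i).2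
      _ ≤ B := (hb i).2
  rw [log_one_add_exp_sub_log_one_add_exp_neg]
  exact logistic_surrogate_approximation_general hσ.le (fun _ _ ↦ (neg_sub _ _).symm) hgap
end

section
/- Let n ≥ 1 and b, p, q : Fin n → ℝ with b i > 0, p i ∈ [0,1], q i ∈ [0,1] for all i. Define ℓ⁺(q) = ∑_{i ∈ Fin n} ∑_{j ∈ Fin n} max(b i * p i − b j * p j, 0) * χ(b i * q i ≤ b j * q j). Then for any index j* maximizing the predicted eCPM b j * q j, the welfare suboptimality is bounded by ℓ⁺: max_{i} (b i * p i) − b j* * p j* ≤ ℓ⁺(q). -/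
/-!
If `j` maximizes the predicted score, then for every `i` the pair `(i, j)` is counted by `ℓ⁺`, and
its summand alone covers the gap between the true values of `i` and `j`, since the other summands
are nonnegative. Applying this to an `i` of maximal true value bounds the suboptimality.
-/

theorem apply_le_sum_sum {ι κ M : Type*} [Fintype ι] [Fintype κ]
    [AddCommMonoid M] [PartialOrder M] [IsOrderedAddMonoid M]
    {f : ι → κ → M} (hf : ∀ i j, 0 ≤ f i j) (i : ι) (j : κ) :
    f i j ≤ ∑ i, ∑ j, f i j :=
  calc f i j ≤ ∑ j, f i j :=
        Finset.single_le_sum (fun j _ => hf i j) (Finset.mem_univ j)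
    _ ≤ ∑ i, ∑ j, f i j :=
        Finset.single_le_sum (f := fun i => ∑ j, f i j)
          (fun i _ => Finset.sum_nonneg fun j _ => hf i j) (Finset.mem_univ i)

section EllPlus

variable {ι R α : Type*} [Fintype ι] [Ring R] [LinearOrder R] [LE α] [DecidableLE α]

/-- The loss `ℓ⁺` of predicted scores `w` against true values `v`; for ads, `v i = b i * p i` and
`w i = b i * q i` are the true and predicted eCPM. A pair with tied scores counts as misranked. -/
def ellPlus (v : ι → R) (w : ι → α) : R :=
  ∑ i, ∑ j, max (v i - v j) 0 * (if w i ≤ w j then 1 else 0)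

variable [IsOrderedRing R]

theorem sub_le_ellPlus (v : ι → R) {w : ι → α} {i j : ι} (hw : w i ≤ w j) :
    v i - v j ≤ ellPlus v w := by
  have summand_nonneg (k l : ι) :
      0 ≤ max (v k - v l) 0 * (if w k ≤ w l then 1 else 0) :=
    mul_nonneg (le_max_right _ _) (by split_ifs <;> simp)
  calc v i - v j ≤ max (v i - v j) 0 := le_max_left _ _
    _ = max (v i - v j) 0 * (if w i ≤ w j then 1 else 0) := by rw [if_pos hw, mul_one]
    _ ≤ ellPlus v w := apply_le_sum_sum summand_nonneg i j

theorem welfare_suboptimality_le_ell_plus_general (v : ι → R) {w : ι → α} {j : ι}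
    (hj : ∀ i, w i ≤ w j) :
    Finset.univ.sup' ⟨j, Finset.mem_univ j⟩ v - v j ≤ ellPlus v w := by
  obtain ⟨i, -, hi⟩ := Finset.exists_mem_eq_sup' ⟨j, Finset.mem_univ j⟩ v
  rw [hi]
  exact sub_le_ellPlus v (hj i)

end EllPlus

/-- The single-slot welfare suboptimality of a prediction `q` is bounded by the
loss `ℓ⁺`. -/
theorem welfare_suboptimality_le_ell_plus
    (n : ℕ) (hn : 1 ≤ n) (b p q : Fin n → ℝ)
    (hb : ∀ i, 0 < b i)
    (hp : ∀ i, p i ∈ Set.Icc (0 : ℝ) 1)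
    (hq : ∀ i, q i ∈ Set.Icc (0 : ℝ) 1)
    (jstar : Fin n) (hjstar : ∀ i, b i * q i ≤ b jstar * q jstar) :
    Finset.univ.sup' ⟨⟨0, hn⟩, Finset.mem_univ _⟩ (fun i => b i * p i) -
        b jstar * p jstar ≤
      ∑ i : Fin n, ∑ j : Fin n,
        max (b i * p i - b j * p j) 0 *
          (if b i * q i ≤ b j * q j then (1 : ℝ) else 0) :=
  welfare_suboptimality_le_ell_plus_general
    (v := fun i => b i * p i) (w := fun i => b i * q i) hjstar
end

section
/- Let n ≥ 1, B > 0, σ > 0, and b, p, p̂, q : Fin n → ℝ with 0 < b i ≤ B and q i ∈ [0,1] for all i. Define ℓ^{hinge,+}_σ(q) = ∑_{i ≠ j} max(b i * p i − b j * p j, 0) * max(−σ * (b i * q i − b j * q j), 0) and the plug-in version ℓ̂^{hinge,+}_σ(q) = ∑_{i ≠ j} max(b i * p̂ i − b j * p̂ j, 0) * max(−σ * (b i * q i − b j * q j), 0), both sums over ordered pairs of distinct indices. Then |ℓ̂^{hinge,+}_σ(q) − ℓ^{hinge,+}_σ(q)| ≤ (σ * B / 2) * ∑_{i ∈ Fin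 n} ∑_{j ∈ Fin n} | (b i * p̂ i − b j * p̂ j) − (b i * p i − b j * p j) |. -/
/-!
The positive part is 1-Lipschitz, so the `(i, j)` term of the loss changes by at most
`|E i j| * h i j`, where `E i j` is the error of the eCPM gap and `h i j` the hinge penalty.
The bound `h i j ≤ σ * B` would lose a factor 2. It is recovered by pairing `(i, j)` with `(j, i)`:
`|E|` is symmetric, and `h i j + h j i` is the positive part plus the negative part of the scaled
predicted gap, that is, its absolute value.
-/

open Finset

lemma two_mul_sum_sum_mul_of_symm {ι R : Type*} [Fintype ι] [NonAssocSemiring R] {w : ι → ι → R}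
    (hw : ∀ i j, w i j = w j i) (h : ι → ι → R) :
    2 * ∑ i, ∑ j, w i j * h i j = ∑ i, ∑ j, w i j * (h i j + h j i) := by
  have hswap : ∑ i, ∑ j, w i j * h i j = ∑ i, ∑ j, w i j * h j i := by
    rw [sum_comm]
    simp only [fun i j ↦ hw j i]
  simp only [mul_add, sum_add_distrib, two_mul, ← hswap]

/-- The hinge penalty with slope `σ` on a predicted gap `x`, incurred when `x` has the wrong
(negative) sign. -/
def hingePenalty (σ x : ℝ) : ℝ :=
  max (-(σ * x)) 0

lemma hingePenalty_nonneg (σ x : ℝ) : 0 ≤ hingePenalty σ x :=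
  le_max_right _ _

lemma hingePenalty_add_hingePenalty_neg (σ x : ℝ) :
    hingePenalty σ x + hingePenalty σ (-x) = |σ| * |x| := by
  rw [hingePenalty, hingePenalty, mul_neg, neg_neg, add_comm, max_zero_add_max_neg_zero_eq_abs_self,
    abs_mul]

section HingePlusLoss

variable {ι : Type*} [Fintype ι] [DecidableEq ι]

/-- The hinge-plus loss of the predicted eCPMs `s` against the reference eCPMs `v`. Reference values
`v i = b i * p i` give the ground-truth loss, and `v i = b i * phat i` the plug-in loss. -/
def hingePlusLoss (σ : ℝ) (v s : ι → ℝ) : ℝ :=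
  ∑ i, ∑ j, if i ≠ j then max (v i - v j) 0 * hingePenalty σ (s i - s j) else 0

lemma hingePlusLoss_eq_sum_sum (σ : ℝ) (v s : ι → ℝ) :
    hingePlusLoss σ v s = ∑ i, ∑ j, max (v i - v j) 0 * hingePenalty σ (s i - s j) := by
  refine sum_congr rfl fun i _ ↦ sum_congr rfl fun j _ ↦ ite_eq_left_iff.mpr fun hij ↦ ?_
  simp [not_not.mp hij]

lemma abs_hingePlusLoss_sub_le_sum_mul_hingePenalty (σ : ℝ) (v v' s : ι → ℝ) :
    |hingePlusLoss σ v s - hingePlusLoss σ v' s| ≤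
      ∑ i, ∑ j, |(v i - v j) - (v' i - v' j)| * hingePenalty σ (s i - s j) := by
  simp only [hingePlusLoss_eq_sum_sum, ← sum_sub_distrib, ← sub_mul]
  refine (abs_sum_le_sum_abs _ _).trans (sum_le_sum fun i _ ↦ ?_)
  refine (abs_sum_le_sum_abs _ _).trans (sum_le_sum fun j _ ↦ ?_)
  have hpenalty := hingePenalty_nonneg σ (s i - s j)
  rw [abs_mul, abs_of_nonneg hpenalty]
  exact mul_le_mul_of_nonneg_right (abs_max_sub_max_le_abs _ _ _) hpenalty

lemma abs_hingePlusLoss_sub_le_sum_mul_abs (σ : ℝ) (v v' s : ι → ℝ) :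
    |hingePlusLoss σ v s - hingePlusLoss σ v' s| ≤
      |σ| / 2 * ∑ i, ∑ j, |(v i - v j) - (v' i - v' j)| * |s i - s j| := by
  have hsymm (i j : ι) : |(v i - v j) - (v' i - v' j)| = |(v j - v i) - (v' j - v' i)| := by
    rw [← abs_neg]
    ring_nf
  have hpair (i j : ι) :
      hingePenalty σ (s i - s j) + hingePenalty σ (s j - s i) = |σ| * |s i - s j| := by
    rw [← neg_sub (s i) (s j), hingePenalty_add_hingePenalty_neg]
  have htwo := two_mul_sum_sum_mul_of_symm hsymm fun i j ↦ hingePenalty σ (s i - s j)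
  simp only [hpair, mul_left_comm _ |σ|, ← mul_sum] at htwo
  linarith [abs_hingePlusLoss_sub_le_sum_mul_hingePenalty σ v v' s]

theorem plug_in_hinge_plus_approximation_general {σ B : ℝ} (hσ : 0 ≤ σ) (v v' : ι → ℝ) {s : ι → ℝ}
    (hs : ∀ i j, |s i - s j| ≤ B) :
    |hingePlusLoss σ v s - hingePlusLoss σ v' s| ≤
      σ * B / 2 * ∑ i, ∑ j, |(v i - v j) - (v' i - v' j)| :=
  calc |hingePlusLoss σ v s - hingePlusLoss σ v' s|
    _ ≤ |σ| / 2 * ∑ i, ∑ j, |(v i - v j) - (v' i - v' j)| * |s i - s j| :=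
      abs_hingePlusLoss_sub_le_sum_mul_abs σ v v' s
    _ ≤ |σ| / 2 * ∑ i, ∑ j, |(v i - v j) - (v' i - v' j)| * B := by
      gcongr with i _ j _
      exact hs i j
    _ = σ * B / 2 * ∑ i, ∑ j, |(v i - v j) - (v' i - v' j)| := by
      simp only [abs_of_nonneg hσ, ← sum_mul]
      ring

end HingePlusLoss

/-- The plug-in hinge-plus loss approximates the true hinge-plus loss up to
`σB/2` times the total absolute estimation error of the eCPM gaps. -/
theorem plug_in_hinge_plus_approximation
    (n : ℕ) (hn : 1 ≤ n) (B σ : ℝ) (hB : 0 < B) (hσ : 0 < σ)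
    (b p phat q : Fin n → ℝ)
    (hb : ∀ i, 0 < b i ∧ b i ≤ B)
    (hq : ∀ i, q i ∈ Set.Icc (0 : ℝ) 1) :
    |(∑ i : Fin n, ∑ j : Fin n,
        (if i ≠ j then
          max (b i * phat i - b j * phat j) 0 *
            max (-(σ * (b i * q i - b j * q j))) 0
        else 0)) -
      (∑ i : Fin n, ∑ j : Fin n,
        (if i ≠ j then
          max (b i * p i - b j * p j) 0 *
            max (-(σ * (b i * q i - b j * q j))) 0
        else 0))| ≤
    (σ * B / 2) *
      ∑ i : Fin n, ∑ j : Fin n,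
        |(b i * phat i - b j * phat j) - (b i * p i - b j * p j)| := by
  have hecpm_nonneg (i : Fin n) : 0 ≤ b i * q i := mul_nonneg (hb i).1.le (hq i).1
  have hecpm_le (i : Fin n) : b i * q i ≤ B :=
    (mul_le_of_le_one_right (hb i).1.le (hq i).2).trans (hb i).2
  exact plug_in_hinge_plus_approximation_general hσ.le (fun i ↦ b i * phat i) (fun i ↦ b i * p i)
    fun i j ↦ abs_sub_le_of_nonneg_of_le (hecpm_nonneg i) (hecpm_le i) (hecpm_nonneg j) (hecpm_le j)
end

section
/- Let n ≥ 1, B > 0, σ > 0, and b, p, q : Fin n → ℝ with 0 < b i ≤ B, p i ∈ [0,1], q i ∈ [0,1] for all i. Define ℓ⁺(q) = ∑_{i ≠ j} max(b i * p i − b j * p j, 0) * χ(b i * q i ≤ b j * q j) and ℓ^{hinge,+}_σ(q) = ∑_{i ≠ j} max(b i * p i − b j * p j, 0) * max(−σ * (b i * q i − b j * q j), 0), both sums over ordered pairs of distinct indices. Then |ℓ^{hinge,+}_σ(q) − ℓ⁺(q)| ≤ (1/2) * max{1, σ*B − 1} * ∑_{i ∈ Fin n} ∑_{j ∈ Fin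 n} |b i * p i − b j * p j|. -/
/-!
The factor `1 / 2` is antisymmetry: `|x i - x j| = (x i - x j)⁺ + (x j - x i)⁺`, and both terms have
the same sum over ordered pairs. It remains to compare hinge and indicator pair by pair: on a
wrongly ranked pair the hinge lies in `[0, σ * B]`, hence within `max 1 (σ * B - 1)` of `1`, and on
a correctly ranked pair both vanish.
-/

theorem abs_hinge_sub_indicator_le {R : Type*} [Ring R] [LinearOrder R] [IsOrderedRing R]
    {B σ u v : R} (hσ : 0 ≤ σ) (huv : v - u ≤ B) :
    |max (-(σ * (u - v))) 0 - (if u ≤ v then 1 else 0)| ≤ max 1 (σ * B - 1) := by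
  rw [← mul_neg, neg_sub]
  split_ifs with h
  · have hinge_nonneg : 0 ≤ σ * (v - u) := mul_nonneg hσ (sub_nonneg.2 h)
    have hinge_le : σ * (v - u) ≤ σ * B := mul_le_mul_of_nonneg_left huv hσ
    rw [max_eq_left hinge_nonneg]
    simpa only [sub_zero, max_comm] using abs_sub_le_max_sub hinge_nonneg hinge_le 1
  · have hinge_nonpos : σ * (v - u) ≤ 0 :=
      mul_nonpos_of_nonneg_of_nonpos hσ (sub_nonpos.2 (le_of_not_ge h))
    rw [max_eq_right hinge_nonpos, sub_zero, abs_zero]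
    exact zero_le_one.trans (le_max_left _ _)

theorem abs_sum_mul_le_sum_mul {ι R : Type*} [Ring R] [LinearOrder R] [IsOrderedRing R]
    {s : Finset ι} {w e : ι → R} {C : R} (hw : ∀ i ∈ s, 0 ≤ w i) (he : ∀ i ∈ s, |e i| ≤ C) :
    |∑ i ∈ s, w i * e i| ≤ (∑ i ∈ s, w i) * C :=
  calc |∑ i ∈ s, w i * e i|
      ≤ ∑ i ∈ s, |w i * e i| := Finset.abs_sum_le_sum_abs _ _
    _ ≤ ∑ i ∈ s, w i * C := Finset.sum_le_sum fun i hi => by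
        rw [abs_mul, abs_of_nonneg (hw i hi)]
        exact mul_le_mul_of_nonneg_left (he i hi) (hw i hi)
    _ = (∑ i ∈ s, w i) * C := (Finset.sum_mul ..).symm

theorem sum_abs_sub_eq_two_nsmul_sum_posPart {ι G : Type*} [Fintype ι] [AddCommGroup G] [Lattice G]
    [AddLeftMono G] (x : ι → G) :
    ∑ i, ∑ j, |x i - x j| = 2 • ∑ i, ∑ j, (x i - x j)⁺ := by
  have sum_negPart : ∑ i, ∑ j, (x i - x j)⁻ = ∑ i, ∑ j, (x i - x j)⁺ := by
    rw [Finset.sum_comm]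
    simp only [← posPart_neg, neg_sub]
  simp only [← posPart_add_negPart, Finset.sum_add_distrib, sum_negPart, two_nsmul]

theorem sum_ite_ne_eq_sum_prod {ι M : Type*} [Fintype ι] [DecidableEq ι] [AddCommMonoid M]
    {f : ι → ι → M} (hf : ∀ i, f i i = 0) :
    (∑ i, ∑ j, if i ≠ j then f i j else 0) = ∑ ij : ι × ι, f ij.1 ij.2 := by
  rw [Fintype.sum_prod_type]
  refine Fintype.sum_congr _ _ fun i => Fintype.sum_congr _ _ fun j => ?_
  rcases eq_or_ne i j with rfl | hij
  · rw [if_neg (not_not_intro rfl), hf]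
  · exact if_pos hij

theorem hinge_plus_approximates_ell_plus_general {ι K : Type*} [Fintype ι] [DecidableEq ι]
    [Field K] [LinearOrder K] [IsStrictOrderedRing K] {B σ : K} (hσ : 0 ≤ σ) (x y : ι → K)
    (hy : ∀ i j, y j - y i ≤ B) :
    |(∑ i, ∑ j, if i ≠ j then max (x i - x j) 0 * max (-(σ * (y i - y j))) 0 else 0) -
      (∑ i, ∑ j, if i ≠ j then max (x i - x j) 0 * (if y i ≤ y j then 1 else 0) else 0)| ≤
    (1 / 2) * max 1 (σ * B - 1) * ∑ i, ∑ j, |x i - x j| := by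
  rw [sum_ite_ne_eq_sum_prod fun i => by simp, sum_ite_ne_eq_sum_prod fun i => by simp,
    ← Finset.sum_sub_distrib]
  simp only [← mul_sub]
  calc _ ≤ (∑ ij : ι × ι, (x ij.1 - x ij.2)⁺) * max 1 (σ * B - 1) :=
        abs_sum_mul_le_sum_mul (fun _ _ => posPart_nonneg _)
          fun ij _ => abs_hinge_sub_indicator_le hσ (hy ij.1 ij.2)
    _ = (1 / 2) * max 1 (σ * B - 1) * ∑ i, ∑ j, |x i - x j| := by
        rw [sum_abs_sub_eq_two_nsmul_sum_posPart, Fintype.sum_prod_type, nsmul_eq_mul,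
          Nat.cast_ofNat]
        ring

/-- The hinge-plus surrogate approximates `ℓ⁺` up to a constant times the total
absolute pairwise eCPM gap. -/
theorem hinge_plus_approximates_ell_plus
    (n : ℕ) (hn : 1 ≤ n) (B σ : ℝ) (hB : 0 < B) (hσ : 0 < σ)
    (b p q : Fin n → ℝ)
    (hb : ∀ i, 0 < b i ∧ b i ≤ B)
    (hp : ∀ i, p i ∈ Set.Icc (0 : ℝ) 1)
    (hq : ∀ i, q i ∈ Set.Icc (0 : ℝ) 1) :
    |(∑ i : Fin n, ∑ j : Fin n,
        (if i ≠ j then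
          max (b i * p i - b j * p j) 0 *
            max (-(σ * (b i * q i - b j * q j))) 0
        else 0)) -
      (∑ i : Fin n, ∑ j : Fin n,
        (if i ≠ j then
          max (b i * p i - b j * p j) 0 *
            (if b i * q i ≤ b j * q j then (1 : ℝ) else 0)
        else 0))| ≤
    (1 / 2) * max 1 (σ * B - 1) *
      ∑ i : Fin n, ∑ j : Fin n, |b i * p i - b j * p j| :=
  hinge_plus_approximates_ell_plus_general hσ.le (fun i => b i * p i) (fun i => b i * q i)
    fun i j => (sub_le_self _ (mul_nonneg (hb i).1.le (hq i).1)).trans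
      ((mul_le_of_le_one_right (hb j).1.le (hq j).2).trans (hb j).2)
end
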